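/- Let n be a positive integer and let a, b ∈ ℝ^n with components a_i, b_i. Then -∑_{i=1}^n a_i*(a_i + b_i)^3 ≤ -(1/8)*∑_{i=1}^n a_i^4 + 172*∑_{i=1}^n b_i^4. -/

import Mathlib

/-- The one-dimensional inequality: the difference of the two sides is
`7/8 (x² + 12/7 xy)² + 3/7 (xy + 7/6 y²)² + (172 - 7/12) y⁴`. -/
lemma neg_mul_cube_le (x y : ℝ) :
    -(x * (x + y) ^ 3) ≤ -(1 / 8) * x ^ 4 + 172 * y ^ 4 := by
  nlinarith [sq_nonneg (x ^ 2 + 12 / 7 * (x * y)), sq_nonneg (x * y + 7 / 6 * y ^ 2),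
    sq_nonneg (y ^ 2)]

/-- Lemma 5: `-aᵀ(a+b)^3 ≤ -(1/8) ∑ a_i^4 + 172 ∑ b_i^4`, with the cube applied
componentwise. -/
theorem neg_inner_cube_le (n : ℕ) (hn : 0 < n) (a b : Fin n → ℝ) :
    -(∑ i, a i * (a i + b i) ^ 3) ≤ -(1 / 8) * ∑ i, (a i) ^ 4 + 172 * ∑ i, (b i) ^ 4 := by
  rw [Finset.mul_sum, Finset.mul_sum, ← Finset.sum_add_distrib, ← Finset.sum_neg_distrib]
  exact Finset.sum_le_sum fun i _ => neg_mul_cube_le (a i) (b i)
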